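/- Pointwise strong small-set expansion bounds: for every n ≥ 1 and all measurable sets A ⊆ 𝒳ⁿ, B ⊆ 𝒴ⁿ with P_X^{⊗n}(A) > 0 and P_Y^{⊗n}(B) > 0, setting α := −(1/n) log P_X^{⊗n}(A) and β := −(1/n) log P_Y^{⊗n}(B), one has Θ̲(α,β) ≤ −(1/n) log P_{XY}^{⊗n}(A × B); moreover −(1/n) log P_{XY}^{⊗n}(A × B) ≤ φ̂(α,β) if α > 0 and β > 0, −(1/n) log P_{XY}^{⊗n}(A × B) ≤ α if β = 0, and −(1/n) log P_{XY}^{⊗n}(A × B) ≤ β if α = 0. -/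

import Mathlib

open MeasureTheory ProbabilityTheory Set Filter
open scoped ENNReal NNReal BigOperators Classical Topology

noncomputable section

namespace BL

variable {X : Type*} {Y : Type*} [MeasurableSpace X] [MeasurableSpace Y]

/-! ### Extended logarithm, exponential, and division conventions -/

/-- Extended logarithm `ℝ≥0∞ → EReal`, with `log 0 = ⊥` and `log ⊤ = ⊤`. -/
def elog (x : ℝ≥0∞) : EReal :=
  if x = 0 then ⊥ else if x = ⊤ then ⊤ else ((Real.log x.toReal : ℝ) : EReal)

/-- Extended exponential `EReal → ℝ≥0∞`, with `exp ⊥ = 0` and `exp ⊤ = ⊤`. -/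
def eexp (x : EReal) : ℝ≥0∞ :=
  if x = ⊥ then 0 else if x = ⊤ then ⊤ else ENNReal.ofReal (Real.exp x.toReal)

/-- Division of an extended real by a real, with the conventions `a/0 = +∞` for `a > 0`,
`a/0 = -∞` for `a < 0` and `0/0 = 0`. -/
def ediv (x : EReal) (c : ℝ) : EReal :=
  if c = 0 then (if 0 < x then ⊤ else if x < 0 then ⊥ else 0)
  else x * ((c⁻¹ : ℝ) : EReal)

/-- Division of a real by an extended real, with the convention `t/(±∞) = 0`. -/
def divE (t : ℝ) (r : EReal) : EReal :=
  if r = ⊤ ∨ r = ⊥ then 0 else ((t / r.toReal : ℝ) : EReal)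

/-- Hölder conjugate, as an extended real (`conj 1 = ⊤`). -/
def conj (q : ℝ) : EReal := if q = 1 then ⊤ else ((q / (q - 1) : ℝ) : EReal)

/-! ### Norms with a real (possibly negative) exponent -/

/-- `p`-"norm" of an `ℝ≥0∞`-valued function (`p` a nonzero real). -/
def enorm (P : Measure X) (F : X → ℝ≥0∞) (p : ℝ) : ℝ≥0∞ :=
  (∫⁻ x, F x ^ p ∂P) ^ (1 / p)

/-- `∞`-norm (essential supremum) of an `ℝ≥0∞`-valued function. -/
def enormInf (P : Measure X) (F : X → ℝ≥0∞) : ℝ≥0∞ := essSup F P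

/-- `p`-"norm" of a nonnegative real-valued function. -/
def rnorm (P : Measure X) (f : X → ℝ) (p : ℝ) : ℝ≥0∞ :=
  enorm P (fun x => ENNReal.ofReal (f x)) p

/-- `∞`-norm of a nonnegative real-valued function. -/
def rnormInf (P : Measure X) (f : X → ℝ) : ℝ≥0∞ :=
  enormInf P (fun x => ENNReal.ofReal (f x))

/-! ### Divergences -/

/-- Kullback--Leibler divergence, valued in `EReal` (equal to `⊤` when undefined). -/
def KL (Q P : Measure X) : EReal :=
  if Q ≪ P ∧ Integrable (fun x => Real.log (Q.rnDeriv P x).toReal) Q then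
    ((∫ x, Real.log (Q.rnDeriv P x).toReal ∂Q : ℝ) : EReal)
  else ⊤

/-- Rényi divergence of order `s` (`s = 1` gives the KL divergence). -/
def Renyi (s : ℝ) (Q P : Measure X) : EReal :=
  if s = 1 then KL Q P
  else (((s - 1)⁻¹ : ℝ) : EReal) *
    elog (∫⁻ x, Q.rnDeriv (Q + P) x ^ s * P.rnDeriv (Q + P) x ^ (1 - s) ∂(Q + P))

/-- First marginal of a measure on a product space. -/
def m1 (P : Measure (X × Y)) : Measure X := P.map Prod.fst

/-- Second marginal of a measure on a product space. -/
def m2 (P : Measure (X × Y)) : Measure Y := P.map Prod.snd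

/-- Couplings of a pair of (probability) measures. -/
def couplings (μ : Measure X) (ν : Measure Y) : Set (Measure (X × Y)) :=
  {π | IsProbabilityMeasure π ∧ π.map Prod.fst = μ ∧ π.map Prod.snd = ν}

/-- `𝔻(QX, QY ‖ P)` : minimum relative entropy over couplings. -/
def Dmin (QX : Measure X) (QY : Measure Y) (P : Measure (X × Y)) : EReal :=
  ⨅ (π : Measure (X × Y)) (_ : π ∈ couplings QX QY), KL π P

/-! ### The functions φ and their envelopes -/

/-- `φ̲(s,t)`. -/
def phiL (P : Measure (X × Y)) (s t : ℝ) : EReal :=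
  ⨅ (QX : Measure X) (QY : Measure Y) (_ : IsProbabilityMeasure QX)
    (_ : IsProbabilityMeasure QY) (_ : QX ≪ m1 P) (_ : QY ≪ m2 P)
    (_ : KL QX (m1 P) = (s : EReal)) (_ : KL QY (m2 P) = (t : EReal)),
    Dmin QX QY P

/-- `φ̄(s,t)`. -/
def phiU (P : Measure (X × Y)) (s t : ℝ) : EReal :=
  ⨆ (QX : Measure X) (QY : Measure Y) (_ : IsProbabilityMeasure QX)
    (_ : IsProbabilityMeasure QY) (_ : QX ≪ m1 P) (_ : QY ≪ m2 P)
    (_ : KL QX (m1 P) = (s : EReal)) (_ : KL QY (m2 P) = (t : EReal)),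
    Dmin QX QY P

/-- Lower convex envelope on `[0,∞)²`, via convex combinations of (at most) 4 points
(Carathéodory). -/
def lce2 (F : ℝ → ℝ → EReal) (a b : ℝ) : EReal :=
  ⨅ (q : Fin 4 → ℝ) (x : Fin 4 → ℝ × ℝ) (_ : ∀ i, 0 ≤ q i) (_ : ∑ i, q i = 1)
    (_ : ∀ i, 0 ≤ (x i).1 ∧ 0 ≤ (x i).2)
    (_ : ∑ i, q i * (x i).1 = a) (_ : ∑ i, q i * (x i).2 = b),
    ∑ i, (q i : EReal) * F (x i).1 (x i).2

/-- Upper concave envelope on `[0,∞)²`. -/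
def uce2 (F : ℝ → ℝ → EReal) (a b : ℝ) : EReal :=
  ⨆ (q : Fin 4 → ℝ) (x : Fin 4 → ℝ × ℝ) (_ : ∀ i, 0 ≤ q i) (_ : ∑ i, q i = 1)
    (_ : ∀ i, 0 ≤ (x i).1 ∧ 0 ≤ (x i).2)
    (_ : ∑ i, q i * (x i).1 = a) (_ : ∑ i, q i * (x i).2 = b),
    ∑ i, (q i : EReal) * F (x i).1 (x i).2

/-- Lower convex envelope on `[0,∞)`. -/
def lce1 (F : ℝ → EReal) (a : ℝ) : EReal :=
  ⨅ (q : Fin 3 → ℝ) (x : Fin 3 → ℝ) (_ : ∀ i, 0 ≤ q i) (_ : ∑ i, q i = 1)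
    (_ : ∀ i, 0 ≤ x i) (_ : ∑ i, q i * x i = a),
    ∑ i, (q i : EReal) * F (x i)

/-- Upper concave envelope on `[0,∞)`. -/
def uce1 (F : ℝ → EReal) (a : ℝ) : EReal :=
  ⨆ (q : Fin 3 → ℝ) (x : Fin 3 → ℝ) (_ : ∀ i, 0 ≤ q i) (_ : ∑ i, q i = 1)
    (_ : ∀ i, 0 ≤ x i) (_ : ∑ i, q i * x i = a),
    ∑ i, (q i : EReal) * F (x i)

/-- `Θ̲(α,β)`: increasing lower convex envelope of `φ̲`. -/
def ThetaL (P : Measure (X × Y)) (α β : ℝ) : EReal :=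
  ⨅ (s : ℝ) (t : ℝ) (_ : α ≤ s) (_ : β ≤ t), lce2 (phiL P) s t

/-- `Θ̄(α,β)`: increasing upper concave envelope of `φ̄`. -/
def ThetaU (P : Measure (X × Y)) (α β : ℝ) : EReal :=
  ⨆ (s : ℝ) (t : ℝ) (_ : 0 ≤ s) (_ : s ≤ α) (_ : 0 ≤ t) (_ : t ≤ β), uce2 (phiU P) s t

/-- `φ_r(s) = inf_{t ≥ 0} (φ̲(s,t) - t/r)` for `r ∈ [1,∞]` (`r` an extended real). -/
def phiRinf (P : Measure (X × Y)) (r : EReal) (s : ℝ) : EReal :=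
  ⨅ (t : ℝ) (_ : 0 ≤ t), phiL P s t - divE t r

/-- `Θ_r(α)` for `r ∈ [1,∞]`. -/
def ThetaGe1 (P : Measure (X × Y)) (r : EReal) (α : ℝ) : EReal :=
  ⨅ (s : ℝ) (_ : α ≤ s), lce1 (phiRinf P r) s

/-- `φ_r(s) = sup_{t ≥ 0} (φ̄(s,t) - t/r)` for `r ∈ (0,1)`. -/
def phiSupR (P : Measure (X × Y)) (r : ℝ) (s : ℝ) : EReal :=
  ⨆ (t : ℝ) (_ : 0 ≤ t), phiU P s t - divE t (r : EReal)

/-- `φ_r(s)` for `r < 0`. -/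
def phiNeg (P : Measure (X × Y)) (r : ℝ) (s : ℝ) : EReal :=
  ⨆ (QX : Measure X) (_ : IsProbabilityMeasure QX) (_ : QX ≪ m1 P)
    (_ : KL QX (m1 P) = (s : EReal)),
    ⨅ (QY : Measure Y) (_ : IsProbabilityMeasure QY) (_ : QY ≪ m2 P),
      Dmin QX QY P - ediv (KL QY (m2 P)) r

/-- `φ_r(s)` for `r < 1`, `r ≠ 0`. -/
def phiLT1 (P : Measure (X × Y)) (r : ℝ) (s : ℝ) : EReal :=
  if 0 < r then phiSupR P r s else phiNeg P r s

/-- `Θ_r(α)` for `r < 1`, `r ≠ 0`. -/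
def ThetaLT1 (P : Measure (X × Y)) (r : ℝ) (α : ℝ) : EReal :=
  ⨆ (s : ℝ) (_ : 0 ≤ s) (_ : s ≤ α), uce1 (phiLT1 P r) s

/-- `α_max = sup {-log μ(A) : μ(A) > 0}`. -/
def alphaMax (μ : Measure X) : EReal :=
  ⨆ (A : Set X) (_ : MeasurableSet A) (_ : μ A ≠ 0), -elog (μ A)

/-! ### Entropies -/

/-- `Ent_{p,p}(f)`. -/
def entPP (P : Measure X) (f : X → ℝ) (p : ℝ) : EReal :=
  (((∫ x, f x ^ p * Real.log (f x ^ p) ∂P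
      - (∫ x, f x ^ p ∂P) * Real.log (∫ x, f x ^ p ∂P))
     / (∫ x, f x ^ p ∂P) : ℝ) : EReal)

/-- `Ent_{p,p̂}(f)` for a nonzero real `p` and a real `p̂`. -/
def ent (P : Measure X) (f : X → ℝ) (p phat : ℝ) : EReal :=
  if phat = p then entPP P f p
  else if phat = 0 then -elog (P {x | 0 < f x})
  else ((p * phat / (p - phat) : ℝ) : EReal) * (elog (rnorm P f p) - elog (rnorm P f phat))

/-- `Ent_{p,∞}(f)` for a nonzero real `p`. -/
def entTop (P : Measure X) (f : X → ℝ) (p : ℝ) : EReal :=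
  if rnormInf P f = ⊤ then (if 0 < p then ⊤ else ⊥)
  else ((-p : ℝ) : EReal) * (elog (rnorm P f p) - elog (rnormInf P f))

/-- `Ent_{p,p*}(f)` for a nonzero real `p` and `p* ∈ [0,∞]`. -/
def entE (P : Measure X) (f : X → ℝ) (p : ℝ) (ps : ℝ≥0∞) : EReal :=
  if ps = ⊤ then entTop P f p else ent P f p ps.toReal

/-- Admissible functions: measurable, nonnegative, not a.e. zero. -/
def Adm (P : Measure X) (f : X → ℝ) : Prop :=
  Measurable f ∧ (∀ x, 0 ≤ f x) ∧ ¬ f =ᵐ[P] (fun _ => 0)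

/-! ### Products -/

/-- `n`-fold product measure. -/
def piM (n : ℕ) (P : Measure X) : Measure (Fin n → X) := Measure.pi fun _ => P

def fstv {n : ℕ} (z : Fin n → X × Y) : Fin n → X := fun i => (z i).1
def sndv {n : ℕ} (z : Fin n → X × Y) : Fin n → Y := fun i => (z i).2

/-- `⟨f,g⟩ = ∫ f(xⁿ) g(yⁿ) dP^{⊗n}`. -/
def innerFG (P : Measure (X × Y)) (n : ℕ) (f : (Fin n → X) → ℝ) (g : (Fin n → Y) → ℝ) :
    ℝ≥0∞ :=
  ∫⁻ z, ENNReal.ofReal (f (fstv z)) * ENNReal.ofReal (g (sndv z)) ∂(piM n P)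

/-- The set `A × B` viewed inside `(X × Y)ⁿ`. -/
def prodSet {n : ℕ} (A : Set (Fin n → X)) (B : Set (Fin n → Y)) : Set (Fin n → X × Y) :=
  {z | fstv z ∈ A ∧ sndv z ∈ B}

/-! ### Kernels -/

/-- Product of kernel measures `⊗ᵢ κ(yᵢ)`. -/
def kpi {n : ℕ} (κ : Kernel Y X) (y : Fin n → Y) : Measure (Fin n → X) :=
  Measure.pi fun i => κ (y i)

/-- The conditional expectation operator `P_{X|Y}^{⊗n}(f)`. -/
def condOp {n : ℕ} (κ : Kernel Y X) (f : (Fin n → X) → ℝ) : (Fin n → Y) → ℝ≥0∞ :=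
  fun y => ∫⁻ x, ENNReal.ofReal (f x) ∂(kpi κ y)

/-- `κ` is a regular conditional probability of the first coordinate given the second. -/
def IsCondKernel (P : Measure (X × Y)) (κ : Kernel Y X) : Prop :=
  ∀ (A : Set X) (B : Set Y), MeasurableSet A → MeasurableSet B →
    P (A ×ˢ B) = ∫⁻ y in B, κ y A ∂(m2 P)

/-! ### η and `Λ̲*` -/

/-- The function `η_{p,p̂}(α,s)`. -/
def eta (p phat α : ℝ) (s : EReal) : EReal :=
  if 0 ≤ p ∧ 0 ≤ phat then max (ediv ((α : EReal) - s) p) (ediv ((α : EReal) - s) phat)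
  else if 0 < p ∧ phat < 0 then ediv ((α : EReal) - s) p
  else if 0 < phat ∧ p < 0 then ediv ((α : EReal) - s) phat
  else ⊥

/-- `Λ̲*_{p,q,p̂,q̂}(α,β)` (time sharing variable of size ≤ 4). -/
def LamLstar (P : Measure (X × Y)) (p q phat qhat α β : ℝ) : EReal :=
  ⨅ (w : Fin 4 → ℝ) (QX : Fin 4 → Measure X) (QY : Fin 4 → Measure Y)
    (_ : ∀ i, 0 ≤ w i) (_ : ∑ i, w i = 1)
    (_ : ∀ i, IsProbabilityMeasure (QX i)) (_ : ∀ i, QX i ≪ m1 P)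
    (_ : ∀ i, IsProbabilityMeasure (QY i)) (_ : ∀ i, QY i ≪ m2 P),
    (∑ i, (w i : EReal) * Dmin (QX i) (QY i) P)
      + eta p phat α (∑ i, (w i : EReal) * KL (QX i) (m1 P))
      + eta q qhat β (∑ i, (w i : EReal) * KL (QY i) (m2 P))

/-! ### Sub/supergradients (slopes in `[0,∞]`) -/

def IsSubgrad2 (F : ℝ → ℝ → EReal) (α β : ℝ) (u v : ℝ≥0∞) : Prop :=
  ∀ s t : ℝ, 0 ≤ s → 0 ≤ t →
    F α β + (u : EReal) * ((s - α : ℝ) : EReal) + (v : EReal) * ((t - β : ℝ) : EReal) ≤ F s t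

def IsSupergrad2 (F : ℝ → ℝ → EReal) (α β : ℝ) (u v : ℝ≥0∞) : Prop :=
  ∀ s t : ℝ, 0 ≤ s → 0 ≤ t →
    F s t ≤ F α β + (u : EReal) * ((s - α : ℝ) : EReal) + (v : EReal) * ((t - β : ℝ) : EReal)

def IsSubgrad1 (F : ℝ → EReal) (α : ℝ) (u : ℝ≥0∞) : Prop :=
  ∀ s : ℝ, 0 ≤ s → F α + (u : EReal) * ((s - α : ℝ) : EReal) ≤ F s

def IsSupergrad1 (F : ℝ → EReal) (α : ℝ) (u : ℝ≥0∞) : Prop :=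
  ∀ s : ℝ, 0 ≤ s → F s ≤ F α + (u : EReal) * ((s - α : ℝ) : EReal)

/-!
Condition on the first of the `n` letters. The conditional masses `u`, `v` and `w` of `A`, `B` and
`A × B` given that letter are the masses of sections of `A`, `B` and `A × B` in the `(n-1)`-fold
powers, and `w(x, y)` is the mass of the product of the sections of `A` at `x` and of `B` at `y`.

For the lower bound, tilt `P_{XY}` by `w`: the tilted law `Q` satisfies
`D(Q‖P) = 𝔼_Q log w - log 𝔼_P w`, while the Donsker–Varadhan inequality bounds the divergences of
its marginals below by `𝔼_Q log u - log 𝔼_P u` and `𝔼_Q log v - log 𝔼_P v`. For the upper bound,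
tilt the marginals by `u` and `v` and apply Donsker–Varadhan with `w` to the couplings of the tilted
marginals. In both cases the exponent triple of `(A, B, A × B)` is, up to a recession direction, a
single-letter triple plus the mean of the exponent triples of the sections.

By induction those section triples lie in `n - 1` times the convex hull of the set of single-letter
triples, up to the recession cone. The hull need not be closed, but in finite dimension the mean of
a random vector that almost surely lies in a convex set belongs to that set. So the triple for
`(A, B, A × B)` lies in `n` times the hull, and the envelopes are read off the hull by
Carathéodory's theorem.
-/

section ConvexGeometry

theorem exists_linearMap_ne_zero_forall_eq_of_vectorSpan_ne_top {E : Type*} [AddCommGroup E]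
    [Module ℝ E] {C : Set E} (hspan : vectorSpan ℝ C ≠ ⊤) :
    ∃ l : E →ₗ[ℝ] ℝ, l ≠ 0 ∧ ∀ a ∈ C, ∀ b ∈ C, l a = l b := by
  obtain ⟨l, hl, hker⟩ := Submodule.exists_le_ker_of_lt_top _ (lt_top_iff_ne_top.2 hspan)
  refine ⟨l, hl, fun a ha b hb => sub_eq_zero.1 ?_⟩
  rw [← map_sub]
  exact hker (vsub_mem_vectorSpan ℝ ha hb)

variable {E : Type*} [NormedAddCommGroup E] [NormedSpace ℝ E] [FiniteDimensional ℝ E]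

theorem exists_linearMap_ne_zero_le_of_notMem_convex {C : Set E} (hC : Convex ℝ C)
    (hne : C.Nonempty) {x : E} (hx : x ∉ C) :
    ∃ l : E →ₗ[ℝ] ℝ, l ≠ 0 ∧ ∀ c ∈ C, l x ≤ l c := by
  by_cases hspan : vectorSpan ℝ C = ⊤
  · have hint : (interior C).Nonempty := hC.interior_nonempty_iff_affineSpan_eq_top.2
      ((AffineSubspace.affineSpan_eq_top_iff_vectorSpan_eq_top_of_nonempty ℝ E E hne).2 hspan)
    obtain ⟨f, hf, hle⟩ := geometric_hahn_banach_of_nonempty_interior_point hC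
      (fun h => hx (interior_subset h)) hint
    refine ⟨-(f : E →ₗ[ℝ] ℝ), fun h => hf ?_, fun c hc => neg_le_neg (hle c hc)⟩
    exact ContinuousLinearMap.coe_injective (neg_eq_zero.1 h)
  · obtain ⟨l, hl, hconst⟩ := exists_linearMap_ne_zero_forall_eq_of_vectorSpan_ne_top hspan
    obtain ⟨c₀, hc₀⟩ := hne
    rcases le_total (l x) (l c₀) with h | h
    · exact ⟨l, hl, fun c hc => hconst c hc c₀ hc₀ ▸ h⟩
    · refine ⟨-l, neg_ne_zero.2 hl, fun c hc => ?_⟩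
      simpa only [LinearMap.neg_apply, neg_le_neg_iff, hconst c hc c₀ hc₀] using h

theorem exists_linearMap_separating_on_submodule {C : Set E} (hC : Convex ℝ C) {m : E}
    (hm : m ∉ C) (V : Submodule ℝ E) (hne : ∃ v ∈ V, m + v ∈ C) :
    ∃ l : E →ₗ[ℝ] ℝ, ¬ V ≤ LinearMap.ker l ∧ ∀ v ∈ V, m + v ∈ C → 0 ≤ l v := by
  let D : Set V := {v | m + (v : E) ∈ C}
  have hD : Convex ℝ D := (hC.translate_preimage_right m).linear_preimage V.subtype
  obtain ⟨v₀, hv₀V, hv₀C⟩ := hne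
  obtain ⟨l, hl, hle⟩ := exists_linearMap_ne_zero_le_of_notMem_convex hD
    (x := 0) ⟨⟨v₀, hv₀V⟩, hv₀C⟩ (by simpa [D] using hm)
  obtain ⟨g, hg⟩ := l.exists_extend
  have hgl : ∀ v (hv : v ∈ V), g v = l ⟨v, hv⟩ := fun v hv => LinearMap.congr_fun hg ⟨v, hv⟩
  refine ⟨g, fun hV => hl (LinearMap.ext fun v => ?_), fun v hv hvC => ?_⟩
  · exact (hgl v v.2).symm.trans (hV v.2)
  · simpa [hgl v hv] using hle ⟨v, hv⟩ hvC

section Mean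

variable {Ω : Type*} [MeasurableSpace Ω] {μ : Measure Ω}

theorem ae_eq_zero_of_integral_eq_zero_of_separating {f : Ω → E} (hf : Integrable f μ)
    (hf0 : ∫ ω, f ω ∂μ = 0) (l : E →ₗ[ℝ] ℝ) (hl : ∀ᵐ ω ∂μ, 0 ≤ l (f ω)) :
    ∀ᵐ ω ∂μ, l (f ω) = 0 := by
  let L := l.toContinuousLinearMap
  have hint : ∫ ω, L (f ω) ∂μ = 0 := by rw [L.integral_comp_comm hf, hf0, map_zero]
  exact (integral_eq_zero_iff_of_nonneg_ae hl (L.integrable_comp hf)).1 hint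

variable [IsProbabilityMeasure μ]

/- `Convex.integral_mem` needs `C` closed. Without it, a mean outside `C` would be weakly
separated from `C`, which confines the random vector almost surely to a hyperplane through its
mean; this can be repeated only finitely often. -/
theorem integral_mem_of_convex {C : Set E} (hC : Convex ℝ C) {f : Ω → E} (hf : Integrable f μ)
    (hfC : ∀ᵐ ω ∂μ, f ω ∈ C) : ∫ ω, f ω ∂μ ∈ C := by
  set m := ∫ ω, f ω ∂μ
  have hg : Integrable (fun ω => f ω - m) μ := hf.sub (integrable_const m)
  have hg0 : ∫ ω, (f ω - m) ∂μ = 0 := by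
    rw [integral_sub hf (integrable_const m), integral_const, probReal_univ, one_smul, sub_self]
  by_contra hmC
  suffices h : ∀ V : Submodule ℝ E, ¬ ∀ᵐ ω ∂μ, f ω - m ∈ V from h ⊤ (by simp)
  intro V
  induction V using WellFoundedLT.induction with
  | ind V ih =>
    intro hV
    obtain ⟨ω₀, hω₀V, hω₀C⟩ := (hV.and hfC).exists
    obtain ⟨l, hlV, hl⟩ := exists_linearMap_separating_on_submodule hC hmC V
      ⟨f ω₀ - m, hω₀V, by rwa [add_sub_cancel]⟩
    have hl0 : ∀ᵐ ω ∂μ, l (f ω - m) = 0 := by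
      refine ae_eq_zero_of_integral_eq_zero_of_separating hg hg0 l ?_
      filter_upwards [hV, hfC] with ω hωV hωC
      exact hl _ hωV (by rwa [add_sub_cancel])
    refine ih (V ⊓ LinearMap.ker l) (inf_lt_left.2 hlV) ?_
    filter_upwards [hV, hl0] with ω hωV hω0 using ⟨hωV, hω0⟩

theorem integral_prodMk_mem_of_convex {C : Set (ℝ × ℝ × ℝ)} (hC : Convex ℝ C) {f g h : Ω → ℝ}
    (hf : Integrable f μ) (hg : Integrable g μ) (hh : Integrable h μ)
    (hmem : ∀ᵐ ω ∂μ, (f ω, g ω, h ω) ∈ C) :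
    (∫ ω, f ω ∂μ, ∫ ω, g ω ∂μ, ∫ ω, h ω ∂μ) ∈ C := by
  have := integral_mem_of_convex hC (hf.prodMk (hg.prodMk hh)) hmem
  rwa [integral_pair hf (hg.prodMk hh), integral_pair hg hh] at this

end Mean

theorem exists_fin_sum_smul_eq_of_mem_convexHull {S : Set E} {d : ℕ}
    (hd : Module.finrank ℝ E ≤ d) {z : E} (hz : z ∈ convexHull ℝ S) :
    ∃ (q : Fin (d + 1) → ℝ) (y : Fin (d + 1) → E),
      (∀ i, 0 ≤ q i) ∧ ∑ i, q i = 1 ∧ (∀ i, y i ∈ S) ∧ ∑ i, q i • y i = z := by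
  obtain ⟨ι, _, y, q, hy, hind, hq, hq1, hsum⟩ := eq_pos_convex_span_of_mem_convexHull hz
  have hcard : Fintype.card ι ≤ Fintype.card (Fin (d + 1)) := by
    rw [Fintype.card_fin]
    exact hind.card_le_finrank_succ.trans
      (Nat.succ_le_succ ((Submodule.finrank_le _).trans hd))
  obtain ⟨e⟩ := Function.Embedding.nonempty_of_card_le hcard
  obtain ⟨y₀, hy₀⟩ := convexHull_nonempty_iff.1 ⟨z, hz⟩
  let r : Fin (d + 1) → ℝ := Function.extend e q 0
  let x : Fin (d + 1) → E := Function.extend e y fun _ => y₀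
  have hre : ∀ i, r (e i) = q i := e.injective.extend_apply q _
  have hxe : ∀ i, x (e i) = y i := e.injective.extend_apply y _
  have hr : ∀ i ∉ range e, r i = 0 := fun i => Function.extend_apply' q _ i
  have hx : ∀ i ∉ range e, x i = y₀ := fun i => Function.extend_apply' y _ i
  refine ⟨r, x, fun i => ?_, ?_, fun i => ?_, ?_⟩
  · by_cases hi : i ∈ range e
    · obtain ⟨j, rfl⟩ := hi
      exact (hq j).le.trans_eq (hre j).symm
    · exact (hr i hi).ge
  · rw [← hq1]
    exact (Fintype.sum_of_injective e e.injective _ _ hr fun i => (hre i).symm).symm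
  · by_cases hi : i ∈ range e
    · obtain ⟨j, rfl⟩ := hi
      exact (hxe j).symm ▸ hy ⟨j, rfl⟩
    · exact (hx i hi).symm ▸ hy₀
  · rw [← hsum]
    refine (Fintype.sum_of_injective e e.injective _ _ (fun i hi => ?_) fun i => ?_).symm
    · rw [hr i hi, zero_smul]
    · rw [hre, hxe]

end ConvexGeometry

section DilatedHull

open scoped Pointwise

variable {E : Type*} [AddCommGroup E] [Module ℝ E] {R : PointedCone ℝ E} {S : Set E} {n : ℕ}

/-- The `n`-fold dilation of the convex hull of `S`, enlarged by the recession cone `R`. The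
`n`-letter exponents of a pair of sets lie in such a hull of single-letter exponents. -/
def dilatedHull (R : PointedCone ℝ E) (S : Set E) (n : ℕ) : Set E :=
  (n : ℝ) • convexHull ℝ S + (R : Set E)

theorem mem_dilatedHull {y : E} :
    y ∈ dilatedHull R S n ↔ ∃ h ∈ convexHull ℝ S, y - (n : ℝ) • h ∈ R := by
  constructor
  · rintro ⟨_, ⟨h, hh, rfl⟩, r, hr, rfl⟩
    exact ⟨h, hh, by simpa using hr⟩
  · rintro ⟨h, hh, hr⟩
    exact ⟨_, ⟨h, hh, rfl⟩, _, hr, add_sub_cancel _ _⟩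

theorem convex_dilatedHull : Convex ℝ (dilatedHull R S n) :=
  ((convex_convexHull ℝ S).smul _).add R.convex

theorem mem_dilatedHull_zero {y : E} (hS : S.Nonempty) (hy : y ∈ R) : y ∈ dilatedHull R S 0 := by
  obtain ⟨k, hk⟩ := hS
  exact mem_dilatedHull.2 ⟨k, subset_convexHull ℝ S hk, by simpa using hy⟩

theorem mem_dilatedHull_succ {k z y : E} (hk : k ∈ S) (hz : z ∈ dilatedHull R S n)
    (hy : y - (k + z) ∈ R) : y ∈ dilatedHull R S (n + 1) := by
  obtain ⟨h, hh, r, hr, rfl⟩ := hz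
  have hkh : k + h ∈ ((n + 1 : ℕ) : ℝ) • convexHull ℝ S := by
    rw [Nat.cast_succ, add_comm, (convex_convexHull ℝ S).add_smul zero_le_one n.cast_nonneg,
      one_smul]
    exact add_mem_add (subset_convexHull ℝ S hk) hh
  refine ⟨k + h, hkh, _, R.add_mem hr hy, ?_⟩
  dsimp only
  abel

end DilatedHull

section Envelopes

variable {F : ℝ → ℝ → EReal} {s t d : ℝ}

/-- The epigraph of `F` over the quadrant `[0, ∞)²`. -/
def epigraph (F : ℝ → ℝ → EReal) : Set (ℝ × ℝ × ℝ) :=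
  {z | 0 ≤ z.1 ∧ 0 ≤ z.2.1 ∧ F z.1 z.2.1 ≤ z.2.2}

/-- The hypograph of `F` over the quadrant `[0, ∞)²`. -/
def hypograph (F : ℝ → ℝ → EReal) : Set (ℝ × ℝ × ℝ) :=
  {z | 0 ≤ z.1 ∧ 0 ≤ z.2.1 ∧ z.2.2 ≤ F z.1 z.2.1}

theorem ereal_coe_sum {ι : Type*} (I : Finset ι) (f : ι → ℝ) :
    ((∑ i ∈ I, f i : ℝ) : EReal) = ∑ i ∈ I, (f i : EReal) :=
  map_sum (⟨⟨Real.toEReal, EReal.coe_zero⟩, EReal.coe_add⟩ : ℝ →+ EReal) f I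

theorem exists_fin_four_of_mem_convexHull {S : Set (ℝ × ℝ × ℝ)}
    (h : (s, t, d) ∈ convexHull ℝ S) :
    ∃ (q : Fin 4 → ℝ) (y : Fin 4 → ℝ × ℝ × ℝ), (∀ i, 0 ≤ q i) ∧ ∑ i, q i = 1 ∧ (∀ i, y i ∈ S) ∧
      ∑ i, q i * (y i).1 = s ∧ ∑ i, q i * (y i).2.1 = t ∧
      ∑ i, (q i : EReal) * ((y i).2.2 : EReal) = d := by
  obtain ⟨q, y, hq, hq1, hy, hsum⟩ :=
    exists_fin_sum_smul_eq_of_mem_convexHull (d := 3) (by simp) h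
  simp only [Prod.ext_iff, Prod.fst_sum, Prod.snd_sum, Prod.smul_fst, Prod.smul_snd,
    smul_eq_mul] at hsum
  refine ⟨q, y, hq, hq1, hy, hsum.1, hsum.2.1, ?_⟩
  rw [← hsum.2.2, ereal_coe_sum]
  simp only [EReal.coe_mul]

theorem lce2_le_of_mem_convexHull_epigraph (h : (s, t, d) ∈ convexHull ℝ (epigraph F)) :
    lce2 F s t ≤ d := by
  obtain ⟨q, y, hq, hq1, hy, hs, ht, hd⟩ := exists_fin_four_of_mem_convexHull h
  calc lce2 F s t
      ≤ ∑ i, (q i : EReal) * F (y i).1 (y i).2.1 :=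
        iInf₂_le_of_le q (fun i => ((y i).1, (y i).2.1)) <| iInf₂_le_of_le hq hq1 <|
          iInf₂_le_of_le (fun i => ⟨(hy i).1, (hy i).2.1⟩) hs <| iInf_le _ ht
    _ ≤ ∑ i, (q i : EReal) * ((y i).2.2 : EReal) := Finset.sum_le_sum fun i _ =>
        mul_le_mul_of_nonneg_left (hy i).2.2 (EReal.coe_nonneg.2 (hq i))
    _ = d := hd

theorem le_uce2_of_mem_convexHull_hypograph (h : (s, t, d) ∈ convexHull ℝ (hypograph F)) :
    d ≤ uce2 F s t := by
  obtain ⟨q, y, hq, hq1, hy, hs, ht, hd⟩ := exists_fin_four_of_mem_convexHull h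
  calc (d : EReal)
      = ∑ i, (q i : EReal) * ((y i).2.2 : EReal) := hd.symm
    _ ≤ ∑ i, (q i : EReal) * F (y i).1 (y i).2.1 := Finset.sum_le_sum fun i _ =>
        mul_le_mul_of_nonneg_left (hy i).2.2 (EReal.coe_nonneg.2 (hq i))
    _ ≤ uce2 F s t :=
        le_iSup₂_of_le q (fun i => ((y i).1, (y i).2.1)) <| le_iSup₂_of_le hq hq1 <|
          le_iSup₂_of_le (fun i => ⟨(hy i).1, (hy i).2.1⟩) hs <|
            le_iSup (fun _ => ∑ i, (q i : EReal) * F (y i).1 (y i).2.1) ht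

end Envelopes

section Divergence

variable {Z W : Type*} [MeasurableSpace Z] [MeasurableSpace W] {Q P : Measure Z} {u : Z → ℝ}

theorem KL_eq_klDiv [IsProbabilityMeasure Q] [IsProbabilityMeasure P] :
    KL Q P = ((InformationTheory.klDiv Q P : ℝ≥0∞) : EReal) := by
  by_cases h : Q ≪ P ∧ Integrable (llr Q P) Q
  · have hnonneg : 0 ≤ ∫ x, llr Q P x ∂Q := by
      simpa using InformationTheory.integral_llr_add_sub_measure_univ_nonneg h.1 h.2
    rw [InformationTheory.klDiv_of_ac_of_integrable h.1 h.2, probReal_univ, probReal_univ,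
      add_sub_cancel_right, EReal.coe_ennreal_ofReal, max_eq_left hnonneg]
    exact if_pos h
  · rw [not_ne_iff.1 (InformationTheory.klDiv_ne_top_iff.not.2 h), EReal.coe_ennreal_top]
    exact if_neg h

theorem KL_nonneg [IsProbabilityMeasure Q] [IsProbabilityMeasure P] : 0 ≤ KL Q P :=
  KL_eq_klDiv (Q := Q) (P := P) ▸ EReal.coe_ennreal_nonneg _

theorem KL_self [IsProbabilityMeasure P] : KL P P = 0 := by
  rw [KL_eq_klDiv, InformationTheory.klDiv_self, EReal.coe_ennreal_zero]

theorem KL_map_le [IsProbabilityMeasure Q] [IsProbabilityMeasure P] {f : Z → W}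
    (hf : Measurable f) : KL (Q.map f) (P.map f) ≤ KL Q P := by
  have := Measure.isProbabilityMeasure_map (μ := Q) hf.aemeasurable
  have := Measure.isProbabilityMeasure_map (μ := P) hf.aemeasurable
  rw [KL_eq_klDiv, KL_eq_klDiv, EReal.coe_ennreal_le_coe_ennreal_iff]
  exact InformationTheory.klDiv_map_le Q P hf

theorem absolutelyContinuous_of_KL_ne_top (h : KL Q P ≠ ⊤) : Q ≪ P := by
  by_contra hac
  exact h (if_neg fun h' => hac h'.1)

theorem integral_pos_of_ae_pos_of_absolutelyContinuous [NeZero Q] (hac : Q ≪ P)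
    (hu0 : ∀ x, 0 ≤ u x) (hu : Integrable u P) (hpos : ∀ᵐ x ∂Q, 0 < u x) :
    0 < ∫ x, u x ∂P := by
  refine (integral_nonneg hu0).lt_of_ne' fun h => ?_
  obtain ⟨x, hx, hx0⟩ :=
    (hpos.and (hac.ae_le ((integral_eq_zero_iff_of_nonneg hu0 hu).1 h))).exists
  exact hx.ne' hx0

theorem integrable_div_rnDeriv [SigmaFinite Q] [SigmaFinite P] (hac : Q ≪ P) (hu0 : ∀ x, 0 ≤ u x)
    (hu : Integrable u P) :
    Integrable (fun x => u x / (Q.rnDeriv P x).toReal) Q ∧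
      ∫ x, u x / (Q.rnDeriv P x).toReal ∂Q ≤ ∫ x, u x ∂P := by
  have hr : Measurable fun x => (Q.rnDeriv P x).toReal :=
    (Measure.measurable_rnDeriv Q P).ennreal_toReal
  have hle (x) : (Q.rnDeriv P x).toReal • (u x / (Q.rnDeriv P x).toReal) ≤ u x := by
    rcases eq_or_ne (Q.rnDeriv P x).toReal 0 with hx | hx
    · rw [hx, zero_smul]
      exact hu0 x
    · exact (mul_div_cancel₀ (u x) hx).le
  have hint : Integrable
      (fun x => (Q.rnDeriv P x).toReal • (u x / (Q.rnDeriv P x).toReal)) P := by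
    refine hu.mono' (hr.aestronglyMeasurable.smul
      (hu.aemeasurable.div hr.aemeasurable).aestronglyMeasurable) (ae_of_all _ fun x => ?_)
    rw [Real.norm_of_nonneg (smul_nonneg ENNReal.toReal_nonneg
      (div_nonneg (hu0 x) ENNReal.toReal_nonneg))]
    exact hle x
  refine ⟨(integrable_rnDeriv_smul_iff hac).1 hint, ?_⟩
  rw [← integral_rnDeriv_smul hac]
  exact integral_mono hint hu hle

/- The easy half of the Donsker–Varadhan formula: integrate `log x ≤ x - 1` at
`x = u / (dQ/dP * ∫ u ∂P)` against `Q`. -/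
theorem integral_log_sub_log_integral_le_KL [IsProbabilityMeasure Q] [SigmaFinite P]
    (hu0 : ∀ x, 0 ≤ u x) (hu : Integrable u P) (hpos : ∀ᵐ x ∂Q, 0 < u x)
    (hlog : Integrable (fun x => Real.log (u x)) Q) :
    ((∫ x, Real.log (u x) ∂Q - Real.log (∫ x, u x ∂P) : ℝ) : EReal) ≤ KL Q P := by
  by_cases h : Q ≪ P ∧ Integrable (llr Q P) Q
  swap
  · exact le_top.trans_eq (if_neg h).symm
  obtain ⟨hac, hllr⟩ := h
  have hKL : KL Q P = ((∫ x, llr Q P x ∂Q : ℝ) : EReal) := if_pos ⟨hac, hllr⟩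
  rw [hKL, EReal.coe_le_coe_iff]
  obtain ⟨hint, hle⟩ := integrable_div_rnDeriv hac hu0 hu
  set I := ∫ x, u x ∂P
  have hI : 0 < I := integral_pos_of_ae_pos_of_absolutelyContinuous hac hu0 hu hpos
  have hptwise : ∀ᵐ x ∂Q, Real.log (u x) - llr Q P x ≤
      u x / (Q.rnDeriv P x).toReal / I + (Real.log I - 1) := by
    filter_upwards [hpos, Measure.rnDeriv_pos hac, hac.ae_le (Measure.rnDeriv_ne_top Q P)]
      with x hux hr0 hrtop
    have hrx : 0 < (Q.rnDeriv P x).toReal := ENNReal.toReal_pos hr0.ne' hrtop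
    have := Real.log_le_sub_one_of_pos (div_pos (div_pos hux hrx) hI)
    rw [Real.log_div (div_pos hux hrx).ne' hI.ne', Real.log_div hux.ne' hrx.ne'] at this
    rw [llr_def]
    linarith
  have hmono := integral_mono_ae (hlog.sub hllr)
    ((hint.div_const I).add (integrable_const (Real.log I - 1))) hptwise
  rw [integral_sub' hlog hllr, integral_add' (hint.div_const I) (integrable_const _),
    integral_div, integral_const, probReal_univ, one_smul] at hmono
  linarith [(div_le_one hI).2 hle]

/-- The probability measure with density proportional to `u` with respect to `P`. It is meaningful
only if `0 ≤ u` and `0 < ∫ u ∂P`. -/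
def reweight (P : Measure Z) (u : Z → ℝ) : Measure Z :=
  P.withDensity fun x => ENNReal.ofReal (u x / ∫ y, u y ∂P)

theorem isProbabilityMeasure_reweight (hu0 : ∀ x, 0 ≤ u x) (hI : 0 < ∫ x, u x ∂P) :
    IsProbabilityMeasure (reweight P u) := by
  have hu : Integrable u P := by
    by_contra h
    exact hI.ne' (integral_undef h)
  constructor
  rw [reweight, withDensity_apply _ MeasurableSet.univ, Measure.restrict_univ,
    ← ofReal_integral_eq_lintegral_ofReal (hu.div_const _)
      (ae_of_all _ fun x => div_nonneg (hu0 x) hI.le), integral_div, div_self hI.ne',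
    ENNReal.ofReal_one]

theorem reweight_absolutelyContinuous : reweight P u ≪ P :=
  withDensity_absolutelyContinuous P _

theorem ae_reweight_pos (hu : Measurable u) (hI : 0 < ∫ x, u x ∂P) :
    ∀ᵐ x ∂reweight P u, 0 < u x := by
  rw [reweight, ae_withDensity_iff (hu.div_const _).ennreal_ofReal]
  refine ae_of_all _ fun x hx => ?_
  rw [ne_eq, ENNReal.ofReal_eq_zero, not_le] at hx
  exact (div_pos_iff_of_pos_right hI).1 hx

theorem integrable_log_reweight [IsFiniteMeasure P] (hu : Measurable u) (hu0 : ∀ x, 0 ≤ u x)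
    {M : ℝ} (huM : ∀ x, u x ≤ M) :
    Integrable (fun x => Real.log (u x)) (reweight P u) := by
  have hdens : Measurable fun x => ENNReal.ofReal (u x / ∫ y, u y ∂P) :=
    (hu.div_const _).ennreal_ofReal
  obtain ⟨C, hC⟩ := (isCompact_Icc (a := (0 : ℝ)) (b := M)).exists_bound_of_continuousOn
    (f := fun t => t * Real.log t) Real.continuous_mul_log.continuousOn
  have hbdd : Integrable (fun x => u x * Real.log (u x)) P :=
    .of_bound (hu.mul hu.log).aestronglyMeasurable C (ae_of_all _ fun x => hC _ ⟨hu0 x, huM x⟩)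
  rw [reweight, integrable_withDensity_iff_integrable_smul' hdens (by simp)]
  refine (hbdd.div_const (∫ y, u y ∂P)).congr (ae_of_all _ fun x => ?_)
  dsimp only
  rw [ENNReal.toReal_ofReal (div_nonneg (hu0 x) (integral_nonneg hu0)), smul_eq_mul,
    div_mul_eq_mul_div]

theorem KL_reweight [SigmaFinite P] (hu : Measurable u) (hu0 : ∀ x, 0 ≤ u x)
    (hI : 0 < ∫ x, u x ∂P) (hlog : Integrable (fun x => Real.log (u x)) (reweight P u)) :
    KL (reweight P u) P =
      ((∫ x, Real.log (u x) ∂reweight P u - Real.log (∫ x, u x ∂P) : ℝ) : EReal) := by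
  have := isProbabilityMeasure_reweight hu0 hI
  have hllr : llr (reweight P u) P =ᵐ[reweight P u]
      fun x => Real.log (u x) - Real.log (∫ y, u y ∂P) := by
    filter_upwards [ae_reweight_pos hu hI, reweight_absolutelyContinuous.ae_le
      (Measure.rnDeriv_withDensity P (hu.div_const (∫ y, u y ∂P)).ennreal_ofReal)] with x hux hx
    simp only [llr_def, reweight, hx]
    rw [ENNReal.toReal_ofReal (div_nonneg (hu0 x) hI.le),
      Real.log_div hux.ne' hI.ne']
  have hint : Integrable (llr (reweight P u) P) (reweight P u) :=
    (hlog.sub (integrable_const _)).congr hllr.symm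
  have hKL : KL (reweight P u) P = ((∫ x, llr (reweight P u) P x ∂reweight P u : ℝ) : EReal) :=
    if_pos ⟨reweight_absolutelyContinuous, hint⟩
  rw [hKL, integral_congr_ae hllr, integral_sub hlog (integrable_const _), integral_const,
    probReal_univ, one_smul]

theorem integrable_log_of_ae_le [IsFiniteMeasure Q] {f g : Z → ℝ} {M : ℝ} (hg : Measurable g)
    (hf : ∀ᵐ x ∂Q, 0 < f x) (hfg : ∀ x, f x ≤ g x) (hgM : ∀ x, g x ≤ M)
    (hlog : Integrable (fun x => Real.log (f x)) Q) :
    Integrable (fun x => Real.log (g x)) Q := by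
  refine integrable_of_le_of_le hg.log.aestronglyMeasurable ?_ ?_ hlog
    (integrable_const (Real.log M))
  · exact hf.mono fun x hx => Real.log_le_log hx (hfg x)
  · exact hf.mono fun x hx => Real.log_le_log (hx.trans_le (hfg x)) (hgM x)

theorem integrable_log_add_const [IsFiniteMeasure Q] {M ε : ℝ} (hu : Measurable u)
    (huM : ∀ x, u x ∈ Icc 0 M) (hε : 0 < ε) : Integrable (fun x => Real.log (u x + ε)) Q :=
  integrable_log_of_ae_le (hu.add_const ε) (ae_of_all _ fun _ => hε)
    (fun x => le_add_of_nonneg_left (huM x).1) (fun x => add_le_add_left (huM x).2 ε)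
    (integrable_const _)

theorem integral_log_comp_sub_log_integral_le_KL_map [IsProbabilityMeasure Q] {f : Z → W}
    [SigmaFinite (P.map f)] {v : W → ℝ} (hf : Measurable f) (hv : Measurable v)
    (hv0 : ∀ x, 0 ≤ v x) (hvi : Integrable v (P.map f)) (hpos : ∀ᵐ x ∂Q, 0 < v (f x))
    (hlog : Integrable (fun x => Real.log (v (f x))) Q) :
    ((∫ x, Real.log (v (f x)) ∂Q - Real.log (∫ y, v y ∂P.map f) : ℝ) : EReal) ≤
      KL (Q.map f) (P.map f) := by
  have := Measure.isProbabilityMeasure_map (μ := Q) hf.aemeasurable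
  rw [← integral_map hf.aemeasurable hv.log.aestronglyMeasurable]
  refine integral_log_sub_log_integral_le_KL hv0 hvi ?_ ?_
  · exact (ae_map_iff hf.aemeasurable (measurableSet_lt measurable_const hv)).2 hpos
  · exact (integrable_map_measure hv.log.aestronglyMeasurable hf.aemeasurable).2 hlog

theorem log_comp_of_map_eq_reweight [IsFiniteMeasure P] {π : Measure W} {f : W → Z} {M : ℝ}
    (hf : Measurable f) (hπ : π.map f = reweight P u) (hu : Measurable u)
    (huM : ∀ x, u x ∈ Icc 0 M) (hI : 0 < ∫ x, u x ∂P) :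
    (∀ᵐ z ∂π, 0 < u (f z)) ∧ Integrable (fun z => Real.log (u (f z))) π ∧
      KL (reweight P u) P =
        ((∫ z, Real.log (u (f z)) ∂π - Real.log (∫ x, u x ∂P) : ℝ) : EReal) := by
  have hpos := ae_reweight_pos hu hI
  have hlog := integrable_log_reweight (P := P) hu (fun x => (huM x).1) fun x => (huM x).2
  have hKL := KL_reweight hu (fun x => (huM x).1) hI hlog
  rw [← hπ] at hpos hlog
  refine ⟨ae_of_ae_map hf.aemeasurable hpos,
    (integrable_map_measure hu.log.aestronglyMeasurable hf.aemeasurable).1 hlog, ?_⟩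
  rw [hKL, ← hπ, integral_map hf.aemeasurable hu.log.aestronglyMeasurable]

end Divergence

section SingleLetter

instance isProbabilityMeasure_m1 (P : Measure (X × Y)) [IsProbabilityMeasure P] :
    IsProbabilityMeasure (m1 P) :=
  Measure.isProbabilityMeasure_map measurable_fst.aemeasurable

instance isProbabilityMeasure_m2 (P : Measure (X × Y)) [IsProbabilityMeasure P] :
    IsProbabilityMeasure (m2 P) :=
  Measure.isProbabilityMeasure_map measurable_snd.aemeasurable

variable {P Q : Measure (X × Y)} {QX : Measure X} {QY : Measure Y}

theorem prod_mem_couplings [IsProbabilityMeasure QX] [IsProbabilityMeasure QY] :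
    QX.prod QY ∈ couplings QX QY :=
  ⟨inferInstance, by simp, by simp⟩

theorem Dmin_nonneg [IsProbabilityMeasure P] : 0 ≤ Dmin QX QY P :=
  le_iInf₂ fun _ hπ => have := hπ.1; KL_nonneg

theorem exists_mem_epigraph_phiL [IsProbabilityMeasure P] [IsProbabilityMeasure Q] {d : ℝ}
    (hd : KL Q P ≤ d) :
    ∃ s t : ℝ, KL (m1 Q) (m1 P) = s ∧ KL (m2 Q) (m2 P) = t ∧ (s, t, d) ∈ epigraph (phiL P) := by
  have hX : KL (m1 Q) (m1 P) ≠ ⊤ := ((KL_map_le measurable_fst).trans hd).trans_lt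
    (EReal.coe_lt_top d) |>.ne
  have hY : KL (m2 Q) (m2 P) ≠ ⊤ := ((KL_map_le measurable_snd).trans hd).trans_lt
    (EReal.coe_lt_top d) |>.ne
  have hs := EReal.coe_toReal hX (EReal.bot_lt_zero.trans_le KL_nonneg).ne'
  have ht := EReal.coe_toReal hY (EReal.bot_lt_zero.trans_le KL_nonneg).ne'
  refine ⟨_, _, hs.symm, ht.symm, EReal.toReal_nonneg KL_nonneg, EReal.toReal_nonneg KL_nonneg, ?_⟩
  have hQ : Q ∈ couplings (m1 Q) (m2 Q) := ⟨inferInstance, rfl, rfl⟩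
  calc phiL P _ _
      ≤ Dmin (m1 Q) (m2 Q) P :=
        iInf₂_le_of_le (m1 Q) (m2 Q) <| iInf₂_le_of_le inferInstance inferInstance <|
          iInf₂_le_of_le (absolutelyContinuous_of_KL_ne_top hX)
            (absolutelyContinuous_of_KL_ne_top hY) <| iInf₂_le hs.symm ht.symm
    _ ≤ KL Q P := iInf₂_le Q hQ
    _ ≤ d := hd

theorem mem_hypograph_phiU [IsProbabilityMeasure P] [IsProbabilityMeasure QX]
    [IsProbabilityMeasure QY] {s t d : ℝ} (hX : QX ≪ m1 P) (hY : QY ≪ m2 P)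
    (hs : KL QX (m1 P) = s) (ht : KL QY (m2 P) = t) (hd : d ≤ Dmin QX QY P) :
    (s, t, d) ∈ hypograph (phiU P) := by
  refine ⟨EReal.coe_nonneg.1 (hs ▸ KL_nonneg), EReal.coe_nonneg.1 (ht ▸ KL_nonneg), hd.trans ?_⟩
  exact le_iSup₂_of_le QX QY <| le_iSup₂_of_le ‹_› ‹_› <| le_iSup₂_of_le hX hY <|
    le_iSup₂ (f := fun _ _ => Dmin QX QY P) hs ht

theorem epigraph_phiL_nonempty [IsProbabilityMeasure P] : (epigraph (phiL P)).Nonempty :=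
  have ⟨_, _, _, _, h⟩ := exists_mem_epigraph_phiL (P := P) (Q := P) (d := 0) KL_self.le
  ⟨_, h⟩

theorem hypograph_phiU_nonempty [IsProbabilityMeasure P] : (hypograph (phiU P)).Nonempty :=
  ⟨(0, 0, 0), mem_hypograph_phiU .rfl .rfl KL_self KL_self Dmin_nonneg⟩

/-- The directions in which the set of triples `(α, β, γ)` with `Θ̲(α, β) ≤ γ` recedes. -/
def lowerCone : PointedCone ℝ (ℝ × ℝ × ℝ) where
  carrier := {r | r.1 ≤ 0 ∧ r.2.1 ≤ 0 ∧ 0 ≤ r.2.2}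
  add_mem' h h' :=
    ⟨add_nonpos h.1 h'.1, add_nonpos h.2.1 h'.2.1, add_nonneg h.2.2 h'.2.2⟩
  zero_mem' := ⟨le_rfl, le_rfl, le_rfl⟩
  smul_mem' c _ h := ⟨mul_nonpos_of_nonneg_of_nonpos c.2 h.1,
    mul_nonpos_of_nonneg_of_nonpos c.2 h.2.1, mul_nonneg c.2 h.2.2⟩

/-- The directions in which the hypograph of a function of two variables recedes. -/
def upperCone : PointedCone ℝ (ℝ × ℝ × ℝ) where
  carrier := {r | r.1 = 0 ∧ r.2.1 = 0 ∧ r.2.2 ≤ 0}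
  add_mem' h h' := ⟨by simp [h.1, h'.1], by simp [h.2.1, h'.2.1], add_nonpos h.2.2 h'.2.2⟩
  zero_mem' := ⟨rfl, rfl, le_rfl⟩
  smul_mem' c _ h := ⟨by simp [h.1], by simp [h.2.1], mul_nonpos_of_nonneg_of_nonpos c.2 h.2.2⟩

theorem mem_lowerCone {r : ℝ × ℝ × ℝ} : r ∈ lowerCone ↔ r.1 ≤ 0 ∧ r.2.1 ≤ 0 ∧ 0 ≤ r.2.2 :=
  Iff.rfl

theorem mem_upperCone {r : ℝ × ℝ × ℝ} : r ∈ upperCone ↔ r.1 = 0 ∧ r.2.1 = 0 ∧ r.2.2 ≤ 0 :=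
  Iff.rfl

variable [IsProbabilityMeasure P] {u : X → ℝ} {v : Y → ℝ} {w : X × Y → ℝ} {M : ℝ}
  {C : Set (ℝ × ℝ × ℝ)}

theorem exists_sub_add_mem_lowerCone (hu : Measurable u) (hv : Measurable v) (hw : Measurable w)
    (hw0 : ∀ p, 0 ≤ w p) (hwu : ∀ p, w p ≤ u p.1) (hwv : ∀ p, w p ≤ v p.2)
    (huM : ∀ x, u x ∈ Icc 0 M) (hvM : ∀ y, v y ∈ Icc 0 M)
    (hI : 0 < ∫ p, w p ∂P) (hC : Convex ℝ C)
    (hmem : ∀ p, 0 < w p →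
      (-Real.log (u p.1), -Real.log (v p.2), -Real.log (w p)) ∈ C) :
    ∃ k ∈ epigraph (phiL P), ∃ z ∈ C,
      (-Real.log (∫ x, u x ∂m1 P), -Real.log (∫ y, v y ∂m2 P), -Real.log (∫ p, w p ∂P)) -
        (k + z) ∈ lowerCone := by
  set Q := reweight P w
  have hQ : IsProbabilityMeasure Q := isProbabilityMeasure_reweight hw0 hI
  have hpos : ∀ᵐ p ∂Q, 0 < w p := ae_reweight_pos hw hI
  have hwlog : Integrable (fun p => Real.log (w p)) Q :=
    integrable_log_reweight hw hw0 fun p => (hwu p).trans (huM _).2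
  have hulog : Integrable (fun p : X × Y => Real.log (u p.1)) Q :=
    integrable_log_of_ae_le (hu.comp measurable_fst) hpos hwu (fun p => (huM p.1).2) hwlog
  have hvlog : Integrable (fun p : X × Y => Real.log (v p.2)) Q :=
    integrable_log_of_ae_le (hv.comp measurable_snd) hpos hwv (fun p => (hvM p.2).2) hwlog
  obtain ⟨s, t, hs, ht, hk⟩ :=
    exists_mem_epigraph_phiL (KL_reweight hw hw0 hI hwlog).le
  have hDVu : ((∫ p, Real.log (u p.1) ∂Q - Real.log (∫ x, u x ∂m1 P) : ℝ) : EReal) ≤ s :=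
    (integral_log_comp_sub_log_integral_le_KL_map measurable_fst hu (fun x => (huM x).1)
      (Integrable.of_mem_Icc 0 M hu.aemeasurable (ae_of_all _ huM))
      (hpos.mono fun p hp => hp.trans_le (hwu p)) hulog).trans_eq hs
  have hDVv : ((∫ p, Real.log (v p.2) ∂Q - Real.log (∫ y, v y ∂m2 P) : ℝ) : EReal) ≤ t :=
    (integral_log_comp_sub_log_integral_le_KL_map measurable_snd hv (fun y => (hvM y).1)
      (Integrable.of_mem_Icc 0 M hv.aemeasurable (ae_of_all _ hvM))
      (hpos.mono fun p hp => hp.trans_le (hwv p)) hvlog).trans_eq ht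
  rw [EReal.coe_le_coe_iff] at hDVu hDVv
  have hz := integral_prodMk_mem_of_convex hC hulog.neg hvlog.neg hwlog.neg (hpos.mono hmem)
  refine ⟨_, hk, _, hz, mem_lowerCone.2 ⟨?_, ?_, ?_⟩⟩ <;>
    simp only [Prod.fst_sub, Prod.snd_sub, Prod.fst_add, Prod.snd_add, Pi.neg_apply,
      integral_neg]
  · linarith
  · linarith
  · linarith

theorem exists_coupling_integral_log_add_le_Dmin [IsProbabilityMeasure QX]
    [IsProbabilityMeasure QY] (hw : Measurable w) (hwM : ∀ p, w p ∈ Icc 0 M) {c : ℝ}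
    (hc : ∫ p, w p ∂P < Real.exp (-c)) :
    ∃ π ∈ couplings QX QY, ∃ ε > 0,
      ((c + ∫ p, Real.log (w p + ε) ∂π : ℝ) : EReal) ≤ Dmin QX QY P := by
  by_contra! hlt
  obtain ⟨D, hD⟩ : ∃ D : ℝ, Dmin QX QY P = D :=
    ⟨_, (EReal.coe_toReal (hlt _ prod_mem_couplings 1 one_pos).ne_top
      (EReal.bot_lt_zero.trans_le Dmin_nonneg).ne').symm⟩
  simp only [hD, EReal.coe_lt_coe_iff] at hlt
  obtain ⟨g, hIg, hgc⟩ := exists_between hc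
  have hg : 0 < g := (integral_nonneg fun p => (hwM p).1).trans_lt hIg
  have hε : 0 < g - ∫ p, w p ∂P := sub_pos.2 hIg
  have hwi : Integrable w P := Integrable.of_mem_Icc 0 M hw.aemeasurable (ae_of_all _ hwM)
  have hI : ∫ p, (w p + (g - ∫ p, w p ∂P)) ∂P = g := by
    rw [integral_add hwi (integrable_const _), integral_const, probReal_univ, one_smul,
      add_sub_cancel]
  have hle : ((D + (-c - Real.log g) : ℝ) : EReal) ≤ Dmin QX QY P := by
    refine le_iInf₂ fun π hπ => ?_
    have := hπ.1
    refine le_trans ?_ (integral_log_sub_log_integral_le_KL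
      (u := fun p => w p + (g - ∫ p, w p ∂P)) (P := P) (Q := π) (fun p => by linarith [(hwM p).1])
      (hwi.add (integrable_const _)) (ae_of_all _ fun p => by linarith [(hwM p).1])
      (integrable_log_add_const hw hwM hε))
    rw [hI, EReal.coe_le_coe_iff]
    linarith [hlt π hπ _ hε]
  rw [hD, EReal.coe_le_coe_iff] at hle
  linarith [(Real.log_lt_iff_lt_exp hg).2 hgc]

theorem exists_sub_add_mem_upperCone (hu : Measurable u) (hv : Measurable v) (hw : Measurable w)
    (huM : ∀ x, u x ∈ Icc 0 M) (hvM : ∀ y, v y ∈ Icc 0 M) (hwM : ∀ p, w p ∈ Icc 0 M)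
    (hIu : 0 < ∫ x, u x ∂m1 P) (hIv : 0 < ∫ y, v y ∂m2 P) (hC : Convex ℝ C)
    (hmem : ∀ p : X × Y, 0 < u p.1 → 0 < v p.2 → ∀ c, w p < Real.exp (-c) →
      (-Real.log (u p.1), -Real.log (v p.2), c) ∈ C)
    {c : ℝ} (hc : ∫ p, w p ∂P < Real.exp (-c)) :
    ∃ k ∈ hypograph (phiU P), ∃ z ∈ C,
      (-Real.log (∫ x, u x ∂m1 P), -Real.log (∫ y, v y ∂m2 P), c) - (k + z) ∈ upperCone := by
  have hQX := isProbabilityMeasure_reweight (fun x => (huM x).1) hIu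
  have hQY := isProbabilityMeasure_reweight (fun y => (hvM y).1) hIv
  obtain ⟨π, ⟨hπ, hπX, hπY⟩, ε, hε, hd⟩ := exists_coupling_integral_log_add_le_Dmin
    (QX := reweight (m1 P) u) (QY := reweight (m2 P) v) hw hwM hc
  obtain ⟨hupos, hulog, hKLu⟩ := log_comp_of_map_eq_reweight measurable_fst hπX hu huM hIu
  obtain ⟨hvpos, hvlog, hKLv⟩ := log_comp_of_map_eq_reweight measurable_snd hπY hv hvM hIv
  have hk := mem_hypograph_phiU reweight_absolutelyContinuous reweight_absolutelyContinuous
    hKLu hKLv hd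
  have hz := integral_prodMk_mem_of_convex hC hulog.neg hvlog.neg
    (integrable_log_add_const hw hwM hε).neg (by
      filter_upwards [hupos, hvpos] with p hup hvp
      refine hmem p hup hvp _ ?_
      have hwε : 0 < w p + ε := add_pos_of_nonneg_of_pos (hwM p).1 hε
      simpa only [Pi.neg_apply, neg_neg, Real.exp_log hwε] using lt_add_of_pos_right _ hε)
  refine ⟨_, hk, _, hz, mem_upperCone.2 ⟨?_, ?_, ?_⟩⟩ <;>
    simp only [Prod.fst_sub, Prod.snd_sub, Prod.fst_add, Prod.snd_add, Pi.neg_apply,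
      integral_neg]
  · ring
  · ring
  · linarith

end SingleLetter
section Powers

section Sections

variable {Z W : Type*} [MeasurableSpace Z] [MeasurableSpace W] {n : ℕ}

instance isProbabilityMeasure_piM (P : Measure Z) [IsProbabilityMeasure P] :
    IsProbabilityMeasure (piM n P) :=
  inferInstanceAs (IsProbabilityMeasure (Measure.pi fun _ => P))

theorem piM_map (P : Measure Z) [IsProbabilityMeasure P] {f : Z → W} (hf : Measurable f) :
    piM n (P.map f) = (piM n P).map fun z i => f (z i) :=
  have := Measure.isProbabilityMeasure_map (μ := P) hf.aemeasurable
  (Measure.pi_map_pi fun _ => hf.aemeasurable).symm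

theorem piM_zero_real (P : Measure Z) [IsProbabilityMeasure P] {A : Set (Fin 0 → Z)}
    (hA : A.Nonempty) : (piM 0 P).real A = 1 := by
  rw [Subsingleton.eq_univ_of_nonempty hA, probReal_univ]

/-- The section of `A ⊆ Zⁿ⁺¹` at a given value `x` of the first coordinate. -/
def consSection (A : Set (Fin (n + 1) → Z)) (x : Z) : Set (Fin n → Z) :=
  {z | (Fin.cons x z : Fin (n + 1) → Z) ∈ A}

/-- The conditional probability of `A ⊆ Zⁿ⁺¹` under `P^{⊗(n+1)}` given the value `x` of the first
coordinate. -/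
def sectionMass (P : Measure Z) (A : Set (Fin (n + 1) → Z)) (x : Z) : ℝ :=
  (piM n P).real (consSection A x)

variable {P : Measure Z} {A : Set (Fin (n + 1) → Z)}

theorem measurable_fin_cons :
    Measurable fun p : Z × (Fin n → Z) => (Fin.cons p.1 p.2 : Fin (n + 1) → Z) :=
  measurable_pi_iff.2 <| Fin.cases (by simpa using measurable_fst) fun i => by
    simp only [Fin.cons_succ]
    fun_prop

theorem measurableSet_consSection (hA : MeasurableSet A) (x : Z) :
    MeasurableSet (consSection A x) :=
  (measurable_fin_cons.comp measurable_prodMk_left) hA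

variable [IsProbabilityMeasure P]

theorem measurable_measure_consSection (hA : MeasurableSet A) :
    Measurable fun x => piM n P (consSection A x) :=
  measurable_measure_prodMk_left (measurable_fin_cons hA)

theorem measurable_sectionMass (hA : MeasurableSet A) : Measurable (sectionMass P A) :=
  (measurable_measure_consSection hA).ennreal_toReal

theorem sectionMass_mem_Icc (x : Z) : sectionMass P A x ∈ Icc 0 1 :=
  ⟨measureReal_nonneg, measureReal_le_one⟩

theorem lintegral_measure_consSection (hA : MeasurableSet A) :
    ∫⁻ x, piM n P (consSection A x) ∂P = piM (n + 1) P A := by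
  have hmp := (measurePreserving_piFinSuccAbove (fun _ : Fin (n + 1) => P) 0).symm
  calc ∫⁻ x, piM n P (consSection A x) ∂P
      = P.prod (piM n P) ((MeasurableEquiv.piFinSuccAbove (fun _ => Z) 0).symm ⁻¹' A) := by
        rw [Measure.prod_apply (hmp.measurable hA)]
        simp only [MeasurableEquiv.piFinSuccAbove, Fin.insertNthEquiv_zero]
        rfl
    _ = piM (n + 1) P A := hmp.measure_preimage hA.nullMeasurableSet

theorem integral_sectionMass (hA : MeasurableSet A) :
    ∫ x, sectionMass P A x ∂P = (piM (n + 1) P).real A := by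
  rw [measureReal_def, ← lintegral_measure_consSection hA]
  exact integral_toReal (measurable_measure_consSection hA).aemeasurable
    (ae_of_all _ fun _ => measure_lt_top _ _)

end Sections

variable {P : Measure (X × Y)} {n : ℕ}

theorem measurable_fstv : Measurable (fstv : (Fin n → X × Y) → Fin n → X) :=
  measurable_pi_iff.2 fun i => measurable_fst.comp (measurable_pi_apply i)

theorem measurable_sndv : Measurable (sndv : (Fin n → X × Y) → Fin n → Y) :=
  measurable_pi_iff.2 fun i => measurable_snd.comp (measurable_pi_apply i)

theorem measurableSet_prodSet {A : Set (Fin n → X)} {B : Set (Fin n → Y)}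
    (hA : MeasurableSet A) (hB : MeasurableSet B) : MeasurableSet (prodSet A B) :=
  (measurable_fstv hA).inter (measurable_sndv hB)

omit [MeasurableSpace X] [MeasurableSpace Y] in
theorem prodSet_nonempty_iff {A : Set (Fin n → X)} {B : Set (Fin n → Y)} :
    (prodSet A B).Nonempty ↔ A.Nonempty ∧ B.Nonempty :=
  ⟨fun ⟨_, hz⟩ => ⟨⟨_, hz.1⟩, ⟨_, hz.2⟩⟩,
    fun ⟨⟨x, hx⟩, ⟨y, hy⟩⟩ => ⟨fun i => (x i, y i), hx, hy⟩⟩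

omit [MeasurableSpace X] [MeasurableSpace Y] in
theorem consSection_prodSet (A : Set (Fin (n + 1) → X)) (B : Set (Fin (n + 1) → Y)) (p : X × Y) :
    consSection (prodSet A B) p = prodSet (consSection A p.1) (consSection B p.2) := by
  have hfst (z : Fin n → X × Y) :
      fstv (Fin.cons p z : Fin (n + 1) → X × Y) = Fin.cons p.1 (fstv z) :=
    funext <| Fin.cases rfl fun _ => rfl
  have hsnd (z : Fin n → X × Y) :
      sndv (Fin.cons p z : Fin (n + 1) → X × Y) = Fin.cons p.2 (sndv z) :=
    funext <| Fin.cases rfl fun _ => rfl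
  ext z
  simp only [consSection, prodSet, Set.mem_ofPred_eq, hfst, hsnd]

theorem sectionMass_prodSet (A : Set (Fin (n + 1) → X)) (B : Set (Fin (n + 1) → Y)) (p : X × Y) :
    sectionMass P (prodSet A B) p =
      (piM n P).real (prodSet (consSection A p.1) (consSection B p.2)) := by
  rw [sectionMass, consSection_prodSet]

variable [IsProbabilityMeasure P]

theorem piM_m1_apply {A : Set (Fin n → X)} (hA : MeasurableSet A) :
    piM n (m1 P) A = piM n P (fstv ⁻¹' A) := by
  rw [m1, piM_map P measurable_fst]
  exact Measure.map_apply measurable_fstv hA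

theorem piM_m2_apply {B : Set (Fin n → Y)} (hB : MeasurableSet B) :
    piM n (m2 P) B = piM n P (sndv ⁻¹' B) := by
  rw [m2, piM_map P measurable_snd]
  exact Measure.map_apply measurable_sndv hB

theorem piM_prodSet_le_m1 {A : Set (Fin n → X)} (hA : MeasurableSet A) (B : Set (Fin n → Y)) :
    (piM n P).real (prodSet A B) ≤ (piM n (m1 P)).real A := by
  rw [measureReal_def (piM n (m1 P)), piM_m1_apply hA]
  exact measureReal_mono inter_subset_left

theorem piM_prodSet_le_m2 (A : Set (Fin n → X)) {B : Set (Fin n → Y)} (hB : MeasurableSet B) :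
    (piM n P).real (prodSet A B) ≤ (piM n (m2 P)).real B := by
  rw [measureReal_def (piM n (m2 P)), piM_m2_apply hB]
  exact measureReal_mono inter_subset_right

theorem piM_prodSet_of_m1_eq_one {A : Set (Fin n → X)} (hA : MeasurableSet A)
    {B : Set (Fin n → Y)} (hB : MeasurableSet B) (hA1 : piM n (m1 P) A = 1) :
    piM n P (prodSet A B) = piM n (m2 P) B := by
  rw [piM_m1_apply hA] at hA1
  rw [piM_m2_apply hB]
  exact measure_congr (inter_ae_eq_right_of_ae_eq_univ
    (ae_eq_univ.2 ((prob_compl_eq_zero_iff (measurable_fstv hA)).2 hA1)))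

theorem piM_prodSet_of_m2_eq_one {A : Set (Fin n → X)} (hA : MeasurableSet A)
    {B : Set (Fin n → Y)} (hB : MeasurableSet B) (hB1 : piM n (m2 P) B = 1) :
    piM n P (prodSet A B) = piM n (m1 P) A := by
  rw [piM_m2_apply hB] at hB1
  rw [piM_m1_apply hA]
  exact measure_congr (inter_ae_eq_left_of_ae_eq_univ
    (ae_eq_univ.2 ((prob_compl_eq_zero_iff (measurable_sndv hB)).2 hB1)))

theorem neg_log_mem_dilatedHull_epigraph_phiL (n : ℕ) {A : Set (Fin n → X)} {B : Set (Fin n → Y)}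
    (hA : MeasurableSet A) (hB : MeasurableSet B) (hpos : 0 < (piM n P).real (prodSet A B)) :
    (-Real.log ((piM n (m1 P)).real A), -Real.log ((piM n (m2 P)).real B),
      -Real.log ((piM n P).real (prodSet A B))) ∈ dilatedHull lowerCone (epigraph (phiL P)) n := by
  induction n with
  | zero =>
    have hAB := nonempty_of_measureReal_ne_zero hpos.ne'
    obtain ⟨hAne, hBne⟩ := prodSet_nonempty_iff.1 hAB
    refine mem_dilatedHull_zero epigraph_phiL_nonempty ?_
    simp [mem_lowerCone, piM_zero_real _ hAB, piM_zero_real _ hAne, piM_zero_real _ hBne]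
  | succ n ih =>
    have hAB := measurableSet_prodSet hA hB
    simp only [← integral_sectionMass hA, ← integral_sectionMass hB,
      ← integral_sectionMass hAB] at hpos ⊢
    obtain ⟨k, hk, z, hz, hr⟩ := exists_sub_add_mem_lowerCone (M := 1)
      (measurable_sectionMass hA) (measurable_sectionMass hB) (measurable_sectionMass hAB)
      (fun p => (sectionMass_mem_Icc p).1)
      (fun p => (sectionMass_prodSet A B p).trans_le
        (piM_prodSet_le_m1 (measurableSet_consSection hA p.1) _))
      (fun p => (sectionMass_prodSet A B p).trans_le
        (piM_prodSet_le_m2 _ (measurableSet_consSection hB p.2)))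
      sectionMass_mem_Icc sectionMass_mem_Icc hpos convex_dilatedHull fun p hp => by
        rw [sectionMass_prodSet] at hp ⊢
        exact ih (measurableSet_consSection hA p.1) (measurableSet_consSection hB p.2) hp
    exact mem_dilatedHull_succ hk hz hr

theorem neg_log_mem_dilatedHull_hypograph_phiU (n : ℕ) {A : Set (Fin n → X)} {B : Set (Fin n → Y)}
    (hA : MeasurableSet A) (hB : MeasurableSet B) (hApos : 0 < (piM n (m1 P)).real A)
    (hBpos : 0 < (piM n (m2 P)).real B) {c : ℝ}
    (hc : (piM n P).real (prodSet A B) < Real.exp (-c)) :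
    (-Real.log ((piM n (m1 P)).real A), -Real.log ((piM n (m2 P)).real B), c) ∈
      dilatedHull upperCone (hypograph (phiU P)) n := by
  induction n generalizing c with
  | zero =>
    have hAne := nonempty_of_measureReal_ne_zero hApos.ne'
    have hBne := nonempty_of_measureReal_ne_zero hBpos.ne'
    rw [piM_zero_real _ (prodSet_nonempty_iff.2 ⟨hAne, hBne⟩), Real.one_lt_exp_iff] at hc
    refine mem_dilatedHull_zero hypograph_phiU_nonempty ?_
    simpa [mem_upperCone, piM_zero_real _ hAne, piM_zero_real _ hBne] using hc.le
  | succ n ih =>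
    have hAB := measurableSet_prodSet hA hB
    simp only [← integral_sectionMass hA, ← integral_sectionMass hB,
      ← integral_sectionMass hAB] at hApos hBpos hc ⊢
    obtain ⟨k, hk, z, hz, hr⟩ := exists_sub_add_mem_upperCone (M := 1)
      (measurable_sectionMass hA) (measurable_sectionMass hB) (measurable_sectionMass hAB)
      sectionMass_mem_Icc sectionMass_mem_Icc sectionMass_mem_Icc hApos hBpos convex_dilatedHull
      (fun p hup hvp d hd => ih (measurableSet_consSection hA p.1)
        (measurableSet_consSection hB p.2) hup hvp ((sectionMass_prodSet A B p).symm.trans_lt hd))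
      hc
    exact mem_dilatedHull_succ hk hz hr

end Powers

section Rates

variable {Z : Type*} [MeasurableSpace Z] {μ : Measure Z} {S : Set Z} {n : ℕ}

/-- The exponential decay rate `-(1/n) log μ(S)`, equal to `⊤` if `μ(S) = 0` and `n ≠ 0`. -/
def rate (n : ℕ) (μ : Measure Z) (S : Set Z) : EReal :=
  -((((n : ℝ)⁻¹ : ℝ) : EReal) * elog (μ S))

theorem rate_of_pos (h : 0 < μ.real S) :
    rate n μ S = (((n : ℝ)⁻¹ * -Real.log (μ.real S) : ℝ) : EReal) := by
  obtain ⟨h0, htop⟩ := ENNReal.toReal_pos_iff.1 h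
  rw [rate, elog, if_neg h0.ne', if_neg htop.ne, ← measureReal_def, ← EReal.coe_mul,
    ← EReal.coe_neg, mul_neg]

theorem rate_of_measure_eq_zero (hn : 1 ≤ n) (h : μ S = 0) : rate n μ S = ⊤ := by
  have hn' : (0 : ℝ) < (n : ℝ)⁻¹ := inv_pos.2 (Nat.cast_pos.2 hn)
  rw [rate, elog, if_pos h, EReal.coe_mul_bot_of_pos hn', EReal.neg_bot]

theorem measureReal_of_eq_exp {α : ℝ} (h : μ S = ENNReal.ofReal (Real.exp (-((n : ℝ) * α)))) :
    μ.real S = Real.exp (-((n : ℝ) * α)) := by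
  rw [measureReal_def, h, ENNReal.toReal_ofReal (Real.exp_pos _).le]

theorem rate_of_eq_exp (hn : 1 ≤ n) {α : ℝ}
    (h : μ S = ENNReal.ofReal (Real.exp (-((n : ℝ) * α)))) : rate n μ S = α := by
  have hr := measureReal_of_eq_exp h
  rw [rate_of_pos (hr ▸ Real.exp_pos _), hr, Real.log_exp, neg_neg,
    inv_mul_cancel_left₀ (Nat.cast_ne_zero.2 (Nat.one_le_iff_ne_zero.1 hn))]

theorem measureReal_lt_exp_of_lt_rate (hn : 1 ≤ n) {c : ℝ}
    (hc : c < rate n μ S) : μ.real S < Real.exp (-((n : ℝ) * c)) := by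
  rcases measureReal_nonneg.eq_or_lt with h0 | hpos
  · exact h0 ▸ Real.exp_pos _
  · rw [rate_of_pos hpos, EReal.coe_lt_coe_iff, lt_inv_mul_iff₀ (Nat.cast_pos.2 hn)] at hc
    rw [← Real.log_lt_iff_lt_exp hpos]
    exact lt_neg.1 hc

variable {P : Measure (X × Y)} [IsProbabilityMeasure P] {A : Set (Fin n → X)}
  {B : Set (Fin n → Y)} {α β : ℝ}

theorem ThetaL_le_rate_prodSet (hn : 1 ≤ n) (hA : MeasurableSet A) (hB : MeasurableSet B)
    (hα : (piM n (m1 P)).real A = Real.exp (-((n : ℝ) * α)))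
    (hβ : (piM n (m2 P)).real B = Real.exp (-((n : ℝ) * β))) :
    ThetaL P α β ≤ rate n (piM n P) (prodSet A B) := by
  have hn0 : (0 : ℝ) < n := Nat.cast_pos.2 hn
  rcases measureReal_nonneg.eq_or_lt' with h0 | hpos
  · rw [rate_of_measure_eq_zero hn ((measureReal_eq_zero_iff (measure_ne_top _ _)).1 h0)]
    exact le_top
  obtain ⟨⟨s, t, d⟩, hstd, hr⟩ :=
    mem_dilatedHull.1 (neg_log_mem_dilatedHull_epigraph_phiL n hA hB hpos)
  rw [hα, hβ, Real.log_exp, Real.log_exp, neg_neg, neg_neg] at hr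
  obtain ⟨hs, ht, hd⟩ := mem_lowerCone.1 hr
  calc ThetaL P α β
      ≤ lce2 (phiL P) s t :=
        iInf₂_le_of_le s t <| iInf₂_le (le_of_mul_le_mul_left (sub_nonpos.1 hs) hn0)
          (le_of_mul_le_mul_left (sub_nonpos.1 ht) hn0)
    _ ≤ d := lce2_le_of_mem_convexHull_epigraph hstd
    _ ≤ rate n (piM n P) (prodSet A B) := by
        rw [rate_of_pos hpos, EReal.coe_le_coe_iff, le_inv_mul_iff₀ hn0]
        exact sub_nonneg.1 hd

theorem rate_prodSet_le_uce2_phiU (hn : 1 ≤ n) (hA : MeasurableSet A) (hB : MeasurableSet B)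
    (hα : (piM n (m1 P)).real A = Real.exp (-((n : ℝ) * α)))
    (hβ : (piM n (m2 P)).real B = Real.exp (-((n : ℝ) * β))) :
    rate n (piM n P) (prodSet A B) ≤ uce2 (phiU P) α β := by
  have hn0 : (0 : ℝ) < n := Nat.cast_pos.2 hn
  refine EReal.ge_of_forall_gt_iff_ge.1 fun c hc => ?_
  obtain ⟨⟨s, t, d⟩, hstd, hr⟩ := mem_dilatedHull.1 (neg_log_mem_dilatedHull_hypograph_phiU n
    hA hB (hα ▸ Real.exp_pos _) (hβ ▸ Real.exp_pos _) (measureReal_lt_exp_of_lt_rate hn hc))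
  rw [hα, hβ, Real.log_exp, Real.log_exp, neg_neg, neg_neg] at hr
  obtain ⟨hs, ht, hd⟩ := mem_upperCone.1 hr
  obtain rfl : α = s := mul_left_cancel₀ hn0.ne' (sub_eq_zero.1 hs)
  obtain rfl : β = t := mul_left_cancel₀ hn0.ne' (sub_eq_zero.1 ht)
  have hcd : c ≤ d := le_of_mul_le_mul_left (sub_nonpos.1 hd) hn0
  exact (EReal.coe_le_coe hcd).trans (le_uce2_of_mem_convexHull_hypograph hstd)

theorem statement11_general (P : Measure (X × Y)) [IsProbabilityMeasure P] (hn : 1 ≤ n)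
    (hA : MeasurableSet A) (hB : MeasurableSet B)
    (hαA : piM n (m1 P) A = ENNReal.ofReal (Real.exp (-((n : ℝ) * α))))
    (hβB : piM n (m2 P) B = ENNReal.ofReal (Real.exp (-((n : ℝ) * β)))) :
    ThetaL P α β ≤ rate n (piM n P) (prodSet A B) ∧
    rate n (piM n P) (prodSet A B) ≤ uce2 (phiU P) α β ∧
    (β = 0 → rate n (piM n P) (prodSet A B) = α) ∧
    (α = 0 → rate n (piM n P) (prodSet A B) = β) := by
  have hα := measureReal_of_eq_exp hαA
  have hβ := measureReal_of_eq_exp hβB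
  refine ⟨ThetaL_le_rate_prodSet hn hA hB hα hβ, rate_prodSet_le_uce2_phiU hn hA hB hα hβ, ?_, ?_⟩
  · rintro rfl
    have hB1 : piM n (m2 P) B = 1 := by simpa using hβB
    exact rate_of_eq_exp hn ((piM_prodSet_of_m2_eq_one hA hB hB1).trans hαA)
  · rintro rfl
    have hA1 : piM n (m1 P) A = 1 := by simpa using hαA
    exact rate_of_eq_exp hn ((piM_prodSet_of_m1_eq_one hA hB hA1).trans hβB)

end Rates

/-- Pointwise strong small-set expansion bounds;
Theorem `thm:strongsse-2`. -/
theorem statement11 [TopologicalSpace X] [PolishSpace X] [BorelSpace X]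
    [TopologicalSpace Y] [PolishSpace Y] [BorelSpace Y]
    (P : Measure (X × Y)) [IsProbabilityMeasure P]
    (hndX : ∀ x : X, m1 P ≠ Measure.dirac x) (hndY : ∀ y : Y, m2 P ≠ Measure.dirac y)
    (n : ℕ) (hn : 1 ≤ n)
    (A : Set (Fin n → X)) (B : Set (Fin n → Y))
    (hA : MeasurableSet A) (hB : MeasurableSet B)
    (α β : ℝ)
    (hαA : piM n (m1 P) A = ENNReal.ofReal (Real.exp (-((n : ℝ) * α))))
    (hβB : piM n (m2 P) B = ENNReal.ofReal (Real.exp (-((n : ℝ) * β)))) :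
    (ThetaL P α β ≤ -((((n : ℝ)⁻¹ : ℝ) : EReal) * elog (piM n P (prodSet A B)))) ∧
    (0 < α → 0 < β →
      -((((n : ℝ)⁻¹ : ℝ) : EReal) * elog (piM n P (prodSet A B))) ≤ uce2 (phiU P) α β) ∧
    (β = 0 →
      -((((n : ℝ)⁻¹ : ℝ) : EReal) * elog (piM n P (prodSet A B))) ≤ (α : EReal)) ∧
    (α = 0 →
      -((((n : ℝ)⁻¹ : ℝ) : EReal) * elog (piM n P (prodSet A B))) ≤ (β : EReal)) :=
  have ⟨hlower, hupper, hβ, hα⟩ := statement11_general P hn hA hB hαA hβB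
  ⟨hlower, fun _ _ => hupper, fun h => (hβ h).le, fun h => (hα h).le⟩

end BL
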